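/- arXiv:2101.00636 — 3 statements merged into one kernel-verified Lean document; each statement's English description precedes it below -/
import Mathlib

section
/- Let T be a computable infinite binary tree and b ∈ ℕ such that for every n the set T_ext^{=n} of extendible nodes of T of length n has at most b elements. Then T has a computable path. -/
/-- A binary tree: a set of binary strings closed under taking prefixes. -/
def IsBinTree (T : Set (List Bool)) : Prop :=
  ∀ σ τ : List Bool, σ <+: τ → τ ∈ T → σ ∈ T

/-- `f : ℕ → Bool` is a path of `T`: every initial segment `[f 0, …, f (n-1)]` is in `T`. -/
def IsPath (T : Set (List Bool)) (f : ℕ → Bool) : Prop :=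
  ∀ n : ℕ, (List.ofFn fun i : Fin n => f i) ∈ T

/-- `σ` is an extendible node of `T`: `σ ∈ T` and `σ` has extensions in `T` of every
greater length. -/
def Extendible (T : Set (List Bool)) (σ : List Bool) : Prop :=
  σ ∈ T ∧ ∀ n : ℕ, ∃ τ ∈ T, σ <+: τ ∧ τ.length = σ.length + n

/-- `T_ext^{=n}`: the set of extendible nodes of `T` of length `n`. -/
def extLevel (T : Set (List Bool)) (n : ℕ) : Set (List Bool) :=
  {σ : List Bool | Extendible T σ ∧ σ.length = n}

theorem ext_of_all {T : Set (List Bool)} (hT : IsBinTree T) {σ : List Bool}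
    (h : ∀ n : ℕ, ∃ τ ∈ T, σ <+: τ ∧ τ.length = σ.length + n) : Extendible T σ := by
  obtain ⟨τ, h1, h2, _⟩ := h 0
  exact ⟨hT _ _ h2 h1, h⟩

theorem unif {T : Set (List Bool)} (hT : IsBinTree T) (L : List (List Bool)) :
    ∃ K, ∀ π ∈ L, ¬ Extendible T π → ∀ τ ∈ T, π <+: τ → τ.length < K := by
  induction L with
  | nil => exact ⟨0, by simp⟩
  | cons a L ih =>
    obtain ⟨K, hK⟩ := ih
    by_cases ha : Extendible T a
    · refine ⟨K, fun π hπ hn => ?_⟩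
      rcases List.mem_cons.1 hπ with rfl | h
      · exact absurd ha hn
      · exact hK π h hn
    · have : ∃ n : ℕ, ∀ τ ∈ T, a <+: τ → τ.length ≠ a.length + n := by
        by_contra hc
        push Not at hc
        exact ha (ext_of_all hT hc)
      obtain ⟨n, hn⟩ := this
      refine ⟨max K (a.length + n), fun π hπ hne τ hτ hp => ?_⟩
      rcases List.mem_cons.1 hπ with rfl | h
      · by_contra hlt
        have hle : π.length + n ≤ τ.length := by omega
        refine hn (τ.take (π.length + n)) (hT _ _ (List.take_prefix _ _) hτ) ?_ ?_
        · exact List.prefix_of_prefix_length_le hp (List.take_prefix _ _) (by simp; omega)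
        · simp; omega
      · have := hK π h hne τ hτ hp
        omega

def lvl (σ : List Bool) (s : ℕ) : List (List Bool) :=
  Nat.rec [σ] (fun _ L => L.flatMap fun τ => [τ ++ [false], τ ++ [true]]) s

theorem mem_lvl (σ : List Bool) (s : ℕ) : ∀ τ, τ ∈ lvl σ s ↔ σ <+: τ ∧ τ.length = σ.length + s := by
  induction s with
  | zero =>
    intro τ
    have h0 : lvl σ 0 = [σ] := rfl
    rw [h0, List.mem_singleton, Nat.add_zero]
    constructor
    · rintro rfl; simp
    · rintro ⟨h, h'⟩; exact (h.eq_of_length h'.symm).symm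
  | succ s ih =>
    intro τ
    have : lvl σ (s+1) = (lvl σ s).flatMap fun τ => [τ ++ [false], τ ++ [true]] := rfl
    rw [this, List.mem_flatMap]
    constructor
    · rintro ⟨ρ, h, h'⟩
      obtain ⟨h1, h2⟩ := (ih ρ).1 h
      simp only [List.mem_cons, List.not_mem_nil, or_false] at h'
      rcases h' with rfl | rfl
      · exact ⟨h1.trans (List.prefix_append _ _), by simp [h2]; omega⟩
      · exact ⟨h1.trans (List.prefix_append _ _), by simp [h2]; omega⟩
    · rintro ⟨h1, h2⟩
      rcases List.eq_nil_or_concat τ with rfl | ⟨ρ, c, rfl⟩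
      · simp at h2
      · refine ⟨ρ, (ih ρ).2 ⟨?_, ?_⟩, ?_⟩
        · simp at h2
          exact List.prefix_of_prefix_length_le h1 (by simp) (by omega)
        · simp at h2; omega
        · cases c <;> simp

theorem lvl_comp (σ : List Bool) : Computable (lvl σ) := by
  apply Primrec.to_comp
  refine Primrec.nat_rec₁ (f := fun (_ : ℕ) (L : List (List Bool)) =>
    L.flatMap fun τ => [τ ++ [false], τ ++ [true]]) [σ] ?_
  refine Primrec.list_flatMap Primrec.snd ?_
  have h : ∀ c : Bool, Primrec fun p : (ℕ × List (List Bool)) × List Bool => p.2 ++ [c] :=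
    fun c => Primrec.list_append.comp Primrec.snd (Primrec.const _)
  exact Primrec.list_cons.comp (h false) (Primrec.list_cons.comp (h true) (Primrec.const []))

theorem all_comp {α β : Type*} [Primcodable α] [Primcodable β] {f : α → List β} {p : α → β → Bool}
    (hf : Computable f) (hp : Computable₂ p) : Computable fun a => (f a).all (p a) := by
  have key : Computable fun a => (Nat.rec true (fun i acc => acc &&
      (Option.casesOn ((f a)[i]?) true (fun x => p a x) : Bool)) (f a).length : Bool) := by
    refine Computable.nat_rec (h := fun a (q : ℕ × Bool) => q.2 &&
      (Option.casesOn ((f a)[q.1]?) true (fun x => p a x) : Bool))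
      (Computable.list_length.comp hf) (Computable.const true) ?_
    have hand : Computable₂ and := Primrec.and.to_comp
    refine hand.comp (Computable.snd.comp Computable.snd) ?_
    refine Computable.option_casesOn ?_ (Computable.const true) ?_
    · exact Computable.list_getElem?.comp (hf.comp Computable.fst)
        (Computable.fst.comp Computable.snd)
    · exact hp.comp (Computable.fst.comp Computable.fst) Computable.snd
  refine key.of_eq fun a => ?_
  have : ∀ n, (Nat.rec true (fun i acc => acc &&
      (Option.casesOn ((f a)[i]?) true (fun x => p a x) : Bool)) n : Bool)
      = ((f a).take n).all (p a) := by
    intro n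
    induction n with
    | zero => simp
    | succ n ih =>
      simp only [ih, List.take_add_one, List.all_append]
      cases (f a)[n]? <;> simp
  rw [this]; simp

theorem ext_one {T : Set (List Bool)} (hT : IsBinTree T) {σ : List Bool} (h : Extendible T σ)
    (n : ℕ) : ∃ τ, Extendible T τ ∧ σ <+: τ ∧ τ.length = σ.length + n := by
  by_contra hc
  push Not at hc
  obtain ⟨K, hK⟩ := unif hT (lvl σ n)
  obtain ⟨τ, h1, h2, h3⟩ := h.2 (n + K)
  have hp : τ.take (σ.length + n) ∈ lvl σ n := by
    rw [mem_lvl]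
    exact ⟨List.prefix_of_prefix_length_le h2 (List.take_prefix _ _) (by simp; omega),
      by simp; omega⟩
  have hp' := (mem_lvl _ _ _).1 hp
  have := hK _ hp (fun he => hc _ he hp'.1 hp'.2) τ h1 (List.take_prefix _ _)
  omega

theorem grow {T : Set (List Bool)} (hT : IsBinTree T)
    (hsplit : ∀ σ, Extendible T σ → ∃ τ₁ τ₂, Extendible T τ₁ ∧ Extendible T τ₂ ∧ σ <+: τ₁ ∧ σ <+: τ₂
      ∧ τ₁.length = τ₂.length ∧ τ₁ ≠ τ₂) (k : ℕ) :
    ∀ σ, Extendible T σ → ∃ n, ∃ F : Finset (List Bool), σ.length ≤ n ∧ F.card = k ∧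
      ∀ ρ ∈ F, Extendible T ρ ∧ σ <+: ρ ∧ ρ.length = n := by
  induction k with
  | zero => exact fun σ _ => ⟨σ.length, ∅, by simp⟩
  | succ k ih =>
    intro σ hσ
    obtain ⟨τ₁, τ₂, e1, e2, p1, p2, hl, hne⟩ := hsplit σ hσ
    obtain ⟨n, F, hn, hF, hall⟩ := ih τ₁ e1
    obtain ⟨ρ, e3, p3, l3⟩ := ext_one hT e2 (n - τ₂.length)
    have hnot : ρ ∉ F := by
      intro hm
      obtain ⟨_, q, _⟩ := hall ρ hm
      exact hne ((List.prefix_of_prefix_length_le q p3 hl.le).eq_of_length hl)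
    refine ⟨n, insert ρ F, p1.length_le.trans hn, by simp [hnot, hF], ?_⟩
    intro x hx
    rcases Finset.mem_insert.1 hx with rfl | hx
    · exact ⟨e3, p2.trans p3, by omega⟩
    · obtain ⟨a, b, c⟩ := hall x hx
      exact ⟨a, p1.trans b, c⟩

/-- A computable infinite binary tree whose sets of extendible nodes of each length have
at most `b` elements has a computable path. -/
theorem stmt6 (T : Set (List Bool)) (hT : IsBinTree T) (hcomp : ComputablePred (· ∈ T))
    (hinf : ∀ n : ℕ, ∃ σ ∈ T, σ.length = n) (b : ℕ)
    (hb : ∀ n : ℕ, ∀ F : Finset (List Bool), ↑F ⊆ extLevel T n → F.card ≤ b) :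
    ∃ f : ℕ → Bool, Computable f ∧ IsPath T f := by
  classical
  have hnil : Extendible T [] := by
    apply ext_of_all hT
    intro n
    obtain ⟨σ, h, h'⟩ := hinf n
    exact ⟨σ, h, by simp, by simp [h']⟩
  obtain ⟨σ, hσ, huniq⟩ : ∃ σ, Extendible T σ ∧ ∀ τ₁ τ₂, Extendible T τ₁ → Extendible T τ₂ →
      σ <+: τ₁ → σ <+: τ₂ → τ₁.length = τ₂.length → τ₁ = τ₂ := by
    by_contra hc
    push Not at hc
    obtain ⟨n, F, _, hF, hall⟩ := grow hT hc (b + 1) [] hnil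
    have := hb n F (fun x hx => ⟨(hall x hx).1, (hall x hx).2.2⟩)
    omega
  obtain ⟨t, ht, htT⟩ := ComputablePred.computable_iff.1 hcomp
  have htT' : ∀ τ, τ ∈ T ↔ t τ = true := fun τ => by
    have := congrFun htT τ
    simpa using this
  -- the test
  let Q : Bool → ℕ × ℕ → Bool := fun c p =>
    (lvl σ p.2).all fun τ => !(t τ) || decide (τ[p.1]? = some c)
  have hQ : ∀ c, Computable (Q c) := by
    intro c
    refine all_comp (f := fun p : ℕ × ℕ => lvl σ p.2)
      (p := fun (p : ℕ × ℕ) τ => !(t τ) || decide (τ[p.1]? = some c))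
      ((lvl_comp σ).comp Computable.snd) ?_
    have hor : Computable₂ or := Primrec.or.to_comp
    have hnot : Computable not := Primrec.not.to_comp
    have heq : Computable fun o : Option Bool => decide (o = some c) :=
      (Primrec.dom_finite _).to_comp
    exact hor.comp (hnot.comp (ht.comp Computable.snd))
      (heq.comp (Computable.list_getElem?.comp Computable.snd
        (Computable.fst.comp Computable.fst)))
  have hQs : ∀ c n s, Q c (n, s) = true ↔
      ∀ τ ∈ T, σ <+: τ → τ.length = σ.length + s → τ[n]? = some c := by
    intro c n s
    simp only [Q, List.all_eq_true, mem_lvl, Bool.or_eq_true, decide_eq_true_eq, Bool.not_eq_true',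
      htT']
    constructor
    · intro h τ h1 h2 h3
      rcases h τ ⟨h2, h3⟩ with h | h
      · simp [h] at h1
      · exact h
    · intro h τ h2
      cases h1 : t τ
      · simp
      · exact Or.inr (h τ h1 h2.1 h2.2)
  let g : ℕ → ℕ → Option Bool := fun n s =>
    cond (Q true (n, s)) (some true) (cond (Q false (n, s)) (some false) none)
  have hg : Computable₂ g :=
    Computable.cond (hQ true) (Computable.const _)
      (Computable.cond (hQ false) (Computable.const _) (Computable.const _))
  have hgs : ∀ n s c, g n s = some c → Q c (n, s) = true := by
    intro n s c h
    simp only [g] at h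
    cases h1 : Q true (n, s) <;> cases h2 : Q false (n, s) <;> simp [h1, h2] at h <;>
      subst h <;> assumption
  have hdom : ∀ n, (Nat.rfindOpt (g n)).Dom := by
    intro n
    rw [Nat.rfindOpt_dom]
    obtain ⟨ρ, r1, r2, r3⟩ := ext_one hT hσ (n + 1)
    obtain ⟨K, hK⟩ := unif hT (lvl σ (n + 1))
    have hlt : n < ρ.length := by omega
    have hq : Q ρ[n] (n, n + 1 + K) = true := by
      rw [hQs]
      intro τ h1 h2 h3
      have hp : τ.take (σ.length + (n + 1)) ∈ lvl σ (n + 1) := by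
        rw [mem_lvl]
        exact ⟨List.prefix_of_prefix_length_le h2 (List.take_prefix _ _) (by simp; omega),
          by simp; omega⟩
      have hp' := (mem_lvl _ _ _).1 hp
      have he : Extendible T (τ.take (σ.length + (n + 1))) := by
        by_contra hne
        have := hK _ hp hne τ h1 (List.take_prefix _ _)
        omega
      have heq := huniq _ _ r1 he r2 hp'.1 (by omega)
      have hpre : ρ <+: τ := heq ▸ List.take_prefix _ _
      obtain ⟨u, rfl⟩ := hpre
      simp [List.getElem?_append_left hlt]
    refine ⟨n + 1 + K, ?_⟩
    simp only [g]
    cases h1 : Q true (n, n + 1 + K)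
    · cases h2 : Q false (n, n + 1 + K)
      · cases h3 : ρ[n] <;> simp [h3, h1, h2] at hq
      · exact ⟨false, by simp⟩
    · exact ⟨true, by simp⟩
  refine ⟨fun n => (Nat.rfindOpt (g n)).get (hdom n), ?_, ?_⟩
  · exact (Partrec.rfindOpt hg).of_eq fun n => (Part.some_get (hdom n)).symm
  · have hA : ∀ n ρ, Extendible T ρ → σ <+: ρ → n < ρ.length →
        ρ[n]? = some ((Nat.rfindOpt (g n)).get (hdom n)) := by
      intro n ρ r1 r2 r3
      obtain ⟨s, hs⟩ := Nat.rfindOpt_spec (Part.get_mem (hdom n))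
      have hq := (hQs _ _ _).1 (hgs n s _ hs)
      obtain ⟨τ, t1, t2, t3⟩ := r1.2 s
      have hσρ := r2.length_le
      have h1 := hq (τ.take (σ.length + s)) (hT _ _ (List.take_prefix _ _) t1)
        (List.prefix_of_prefix_length_le (r2.trans t2) (List.take_prefix _ _) (by simp; omega))
        (by simp; omega)
      obtain ⟨u, rfl⟩ := t2
      rw [List.getElem?_take] at h1
      split at h1
      · rwa [List.getElem?_append_left r3] at h1
      · simp at h1
    intro n
    obtain ⟨ρ, r1, r2, r3⟩ := ext_one hT hσ n
    have : (List.ofFn fun i : Fin n => (Nat.rfindOpt (g i)).get (hdom i)) = ρ.take n := by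
      apply List.ext_getElem
      · simp; omega
      · intro i h1 h2
        simp only [List.length_ofFn] at h1
        have hi : i < ρ.length := by omega
        have := hA i ρ r1 r2 hi
        rw [List.getElem?_eq_getElem hi] at this
        simp only [List.getElem_ofFn, List.getElem_take]
        exact (Option.some.inj this).symm
    rw [this]
    exact hT _ _ (List.take_prefix _ _) r1.1
end

section
/- Let T be a computable infinite binary tree and c ∈ ℕ such that for every n the set T_ext^{=n} of extendible nodes of T of length n has at most c elements. Then there exists a computable infinite tree T' of strings over {0,1,2} such that for every n the set of elements of T' of length n has at most c elements, and such that for every path g of T': the set {s ∈ ℕ : g(s) ≠ 2} is infinite, and the function f : ℕ → Bool listing the values of g at the positions s with g(s) ≠ 2, in increasing order of s, is a path of T. -/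
/-- A tree of strings over ℕ: a set of finite sequences of naturals closed under prefixes. -/
def IsTreeN (T : Set (List ℕ)) : Prop :=
  ∀ σ τ : List ℕ, σ <+: τ → τ ∈ T → σ ∈ T

/-- `f : ℕ → ℕ` is a path of `T`: every initial segment `[f 0, …, f (n-1)]` is in `T`. -/
def IsPathN (T : Set (List ℕ)) (f : ℕ → ℕ) : Prop :=
  ∀ n : ℕ, (List.ofFn fun i : Fin n => f i) ∈ T

/-- A set of strings over ℕ is prefix-free if no element is a proper prefix of another. -/
def PrefixFreeN (P : Set (List ℕ)) : Prop :=
  ∀ σ ∈ P, ∀ τ ∈ P, σ <+: τ → σ = τ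


theorem aux_filter {α β : Type*} [Primcodable α] [Primcodable β] {l : α → List β}
    {p : α → β → Bool} (hl : Computable l) (hp : Computable₂ p) :
    Computable fun a => (l a).filter (p a) := by
  have hstep : Computable₂ (fun (a : α) (y : ℕ × List β) =>
      y.2 ++ (Option.casesOn (motive := fun _ => List β) ((l a)[y.1]?) []
        (fun b => cond (p a b) [b] []))) := by
    refine Computable.list_append.comp (Computable.snd.comp Computable.snd) ?_
    refine Computable.option_casesOn
      (g := fun (x : α × (ℕ × List β)) b => cond (p x.1 b) [b] [])
      (Computable.list_getElem?.comp (hl.comp Computable.fst)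
        (Computable.fst.comp Computable.snd)) (Computable.const []) ?_
    exact Computable.cond (hp.comp (Computable.fst.comp Computable.fst) Computable.snd)
      (Computable.list_cons.comp Computable.snd (Computable.const [])) (Computable.const [])
  have h := Computable.nat_rec (Computable.list_length.comp hl) (Computable.const []) hstep
  refine h.of_eq fun a => ?_
  have key : ∀ i, Nat.rec (motive := fun _ => List β) [] (fun y IH =>
      IH ++ (Option.casesOn (motive := fun _ => List β) ((l a)[y]?) []
        (fun b => cond (p a b) [b] []))) i = ((l a).take i).filter (p a) := by
    intro i
    induction i with
    | zero => simp
    | succ i ih =>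
      simp only [ih, List.take_add_one, List.filter_append]
      congr 1
      cases (l a)[i]? with
      | none => simp
      | some b => cases hb : p a b <;> simp [hb]
  have := key (l a).length
  rw [List.take_length] at this
  exact this

def auxL : ℕ → List (List Bool)
  | 0 => [[]]
  | n + 1 => (auxL n).map (List.cons true) ++ (auxL n).map (List.cons false)

theorem mem_auxL (n : ℕ) (σ : List Bool) : σ ∈ auxL n ↔ σ.length = n := by
  induction n generalizing σ with
  | zero => simp [auxL]
  | succ n ih =>
    cases σ with
    | nil => simp [auxL]
    | cons b σ => cases b <;> simp [auxL, ih]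

theorem auxL_nodup (n : ℕ) : (auxL n).Nodup := by
  induction n with
  | zero => simp [auxL]
  | succ n ih =>
    refine List.Nodup.append (ih.map (List.cons_injective)) (ih.map (List.cons_injective)) ?_
    intro x hx hy
    simp only [List.mem_map] at hx hy
    obtain ⟨a, _, rfl⟩ := hx
    obtain ⟨b, _, hb⟩ := hy
    simp at hb

theorem auxL_primrec : Primrec auxL := by
  have h : Primrec₂ (fun (_ : ℕ) (l : List (List Bool)) =>
      l.map (List.cons true) ++ l.map (List.cons false)) := by
    refine Primrec.list_append.comp (Primrec.list_map Primrec.snd ?_)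
      (Primrec.list_map Primrec.snd ?_)
    · exact Primrec.list_cons.comp (Primrec.const true) Primrec.snd
    · exact Primrec.list_cons.comp (Primrec.const false) Primrec.snd
  refine (Primrec.nat_rec₁ [[]] h).of_eq fun n => ?_
  induction n with
  | zero => rfl
  | succ n ih => simp only [ih, auxL]

/-- `σ` has an extension in `T` by `k` bits. -/
def auxB (d : List Bool → Bool) (σ : List Bool) (k : ℕ) : Bool :=
  decide (0 < ((auxL k).filter (fun τ => d (σ ++ τ))).length)

theorem auxB_iff (d : List Bool → Bool) (σ : List Bool) (k : ℕ) :
    auxB d σ k = true ↔ ∃ τ : List Bool, τ.length = k ∧ d (σ ++ τ) = true := by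
  simp [auxB, List.length_pos_iff_exists_mem, mem_auxL]

theorem auxB_comp {d : List Bool → Bool} (hd : Computable d) : Computable₂ (auxB d) := by
  have h1 : Computable (fun x : List Bool × ℕ =>
      ((auxL x.2).filter (fun τ => d (x.1 ++ τ))).length) :=
    Computable.list_length.comp (aux_filter (p := fun (x : List Bool × ℕ) τ => d (x.1 ++ τ))
      (auxL_primrec.to_comp.comp Computable.snd)
      (hd.comp (Computable.list_append.comp (Computable.fst.comp Computable.fst) Computable.snd)))
  have h2 : Computable₂ (fun a b : ℕ => decide (a < b)) := Primrec.nat_lt.decide.to_comp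
  exact h2.comp (Computable.const 0) h1

def auxE (d : List Bool → Bool) (n k : ℕ) : List (List Bool) :=
  (auxL n).filter (fun σ => auxB d σ k)

theorem mem_auxE (d : List Bool → Bool) (n k : ℕ) (σ : List Bool) :
    σ ∈ auxE d n k ↔ σ.length = n ∧ auxB d σ k = true := by
  simp [auxE, mem_auxL]

theorem auxE_nodup (d : List Bool → Bool) (n k : ℕ) : (auxE d n k).Nodup :=
  (auxL_nodup n).filter _

theorem auxE_comp {d : List Bool → Bool} (hd : Computable d) :
    Computable (fun x : ℕ × ℕ => auxE d x.1 x.2) :=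
  aux_filter (p := fun (x : ℕ × ℕ) σ => auxB d σ x.2)
      (auxL_primrec.to_comp.comp Computable.fst)
      ((auxB_comp hd).comp Computable.snd (Computable.snd.comp Computable.fst))

theorem auxE_card (d : List Bool → Bool) (n k : ℕ) :
    (auxE d n k).toFinset.card = (auxE d n k).length :=
  List.toFinset_card_of_nodup (auxE_nodup d n k)

theorem auxE_mono (d : List Bool → Bool) (n k r : ℕ) :
    (auxE d n (r + k)).length ≤ (auxE d (n + r) k).length := by
  rw [← auxE_card, ← auxE_card]
  refine le_trans (Finset.card_le_card (t := (auxE d (n + r) k).toFinset.image (List.take n)) ?_)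
    Finset.card_image_le
  intro σ hσ
  rw [List.mem_toFinset, mem_auxE, auxB_iff] at hσ
  obtain ⟨hn, τ, hτ, hd⟩ := hσ
  rw [Finset.mem_image]
  refine ⟨σ ++ τ.take r, ?_, by simp [← hn]⟩
  rw [List.mem_toFinset, mem_auxE, auxB_iff]
  refine ⟨by simp [hn, hτ], τ.drop r, by simp [hτ], ?_⟩
  rwa [List.append_assoc, List.take_append_drop]

theorem auxB_anti {T : Set (List Bool)} (hT : IsBinTree T) {d : List Bool → Bool}
    (hd : ∀ σ, d σ = true ↔ σ ∈ T) (σ : List Bool) {k k' : ℕ} (h : k ≤ k')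
    (hB : auxB d σ k' = true) : auxB d σ k = true := by
  rw [auxB_iff] at *
  obtain ⟨τ, hτ, h1⟩ := hB
  refine ⟨τ.take k, by simp [hτ, h], ?_⟩
  rw [hd] at *
  refine hT _ _ ?_ h1
  exact (List.prefix_append_right_inj σ).2 (List.take_prefix k τ)

theorem aux_exists {T : Set (List Bool)} (hT : IsBinTree T) {d : List Bool → Bool}
    (hd : ∀ σ, d σ = true ↔ σ ∈ T) (c : ℕ)
    (hc : ∀ n : ℕ, ∀ F : Finset (List Bool), ↑F ⊆ extLevel T n → F.card ≤ c) (n : ℕ) :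
    ∃ k, (auxE d n k).length ≤ c := by
  have h1 : ∀ σ : List Bool, ∃ k, auxB d σ k = true → Extendible T σ := by
    intro σ
    by_contra! hcon
    obtain ⟨h0, hne⟩ := hcon 0
    apply hne
    refine ⟨?_, fun m => ?_⟩
    · obtain ⟨τ, hτ, h⟩ := (auxB_iff _ _ _).1 h0
      rw [hd] at h
      exact hT _ _ (List.prefix_append _ _) h
    · obtain ⟨τ, hτ, h⟩ := (auxB_iff _ _ _).1 (hcon m).1
      exact ⟨σ ++ τ, (hd _).1 h, List.prefix_append _ _, by simp [hτ]⟩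
  choose K hK using h1
  refine ⟨(auxL n).toFinset.sup K, ?_⟩
  rw [← auxE_card]
  apply hc n
  intro σ hσ
  rw [Finset.mem_coe, List.mem_toFinset, mem_auxE] at hσ
  refine ⟨hK σ (auxB_anti hT hd σ ?_ hσ.2), hσ.1⟩
  exact Finset.le_sup (f := K) (by rw [List.mem_toFinset, mem_auxL]; exact hσ.1)

def auxDec (τ : List ℕ) : List Bool := τ.map (fun x => decide (x = 1))
def auxEnc (σ : List Bool) : List ℕ := σ.map (fun b => cond b 1 0)

theorem auxDec_enc (σ : List Bool) : auxDec (auxEnc σ) = σ := by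
  induction σ with
  | nil => rfl
  | cons b σ ih =>
    simp only [auxDec, auxEnc, List.map_cons] at *
    rw [ih]; cases b <;> rfl

theorem auxDec_primrec : Primrec auxDec :=
  Primrec.list_map Primrec.id ((Primrec.eq.comp Primrec.snd (Primrec.const 1)).decide)

theorem auxEnc_primrec : Primrec auxEnc :=
  Primrec.list_map Primrec.id
    (Primrec.cond Primrec.snd (Primrec.const 1) (Primrec.const 0))

/-- Reduction of the extendible-node bound to the level bound: from a computable infinite
binary tree `T` with levels of extendible nodes bounded by `c`, one obtains a computable
infinite tree of strings over `{0,1,2}` with levels bounded by `c`, each of whose paths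
takes values `≠ 2` infinitely often and, read off at those positions in increasing order,
yields a path of `T`. -/
theorem stmt11 (T : Set (List Bool)) (hT : IsBinTree T) (hcomp : ComputablePred (· ∈ T))
    (hinf : ∀ n : ℕ, ∃ σ ∈ T, σ.length = n) (c : ℕ)
    (hc : ∀ n : ℕ, ∀ F : Finset (List Bool), ↑F ⊆ extLevel T n → F.card ≤ c) :
    ∃ T' : Set (List ℕ), IsTreeN T' ∧ ComputablePred (· ∈ T') ∧
      (∀ τ ∈ T', ∀ x ∈ τ, x < 3) ∧
      (∀ n : ℕ, ∃ τ ∈ T', τ.length = n) ∧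
      (∀ n : ℕ, ∀ F : Finset (List ℕ),
        ↑F ⊆ {τ ∈ T' | τ.length = n} → F.card ≤ c) ∧
      ∀ g : ℕ → ℕ, IsPathN T' g →
        {s : ℕ | g s ≠ 2}.Infinite ∧
        IsPath T (fun n => decide (g (Nat.nth (fun s => g s ≠ 2) n) = 1)) := by
  obtain ⟨dT, hdT⟩ := hcomp
  obtain ⟨d, hd, hdc⟩ : ∃ d : List Bool → Bool, (∀ σ, d σ = true ↔ σ ∈ T) ∧ Computable d :=
    ⟨fun σ => decide (σ ∈ T), fun σ => by simp, hdT⟩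
  have hex : ∀ n, ∃ k, (auxE d n k).length ≤ c := aux_exists hT hd c hc
  set K : ℕ → ℕ := fun n => Nat.find (hex n) with hK
  have hKc : Computable K := by
    refine Computable.find (P := fun n k => (auxE d n k).length ≤ c) ?_ hex
    apply Computable.computablePred
    have h2 : Computable₂ (fun a b : ℕ => decide (a ≤ b)) := Primrec.nat_le.decide.to_comp
    exact h2.comp (Computable.list_length.comp (auxE_comp hdc)) (Computable.const c)
  have hKs : ∀ n, (auxE d n (K n)).length ≤ c := fun n => Nat.find_spec (hex n)
  have hKm : ∀ n r, K n ≤ r + K (n + r) := fun n r =>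
    Nat.find_min' (hex n) ((auxE_mono d n _ r).trans (hKs (n + r)))
  -- the binary tree of bounded width
  have hB : ∀ σ ρ : List Bool, auxB d (σ ++ ρ) (K (σ ++ ρ).length) = true →
      auxB d σ (K σ.length) = true := by
    intro σ ρ h
    refine auxB_anti hT hd σ (k' := ρ.length + K (σ.length + ρ.length)) (hKm _ _) ?_
    rw [auxB_iff] at *
    obtain ⟨τ, hτ, h1⟩ := h
    refine ⟨ρ ++ τ, by simp [hτ], ?_⟩
    rwa [← List.append_assoc]
  refine ⟨{τ | auxEnc (auxDec τ) = τ ∧ auxB d (auxDec τ) (K (auxDec τ).length) = true},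
    ?_, ?_, ?_, ?_, ?_, ?_⟩
  · rintro σ _ ⟨ρ, rfl⟩ ⟨h1, h2⟩
    simp only [auxDec, auxEnc, List.map_append] at h1
    refine ⟨(List.append_inj h1 (by simp)).1, ?_⟩
    apply hB (auxDec σ) (auxDec ρ)
    simpa only [auxDec, List.map_append] using h2
  · have h1 : Computable (fun τ : List ℕ => decide (auxEnc (auxDec τ) = τ)) :=
      (Primrec.eq.comp (auxEnc_primrec.comp auxDec_primrec) Primrec.id).decide.to_comp
    have h2 : Computable (fun τ : List ℕ => auxB d (auxDec τ) (K (auxDec τ).length)) :=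
      (auxB_comp hdc).comp auxDec_primrec.to_comp
        (hKc.comp (Computable.list_length.comp auxDec_primrec.to_comp))
    refine ⟨fun τ => inferInstanceAs (Decidable (_ ∧ _)), ?_⟩
    refine (Primrec.and.to_comp.comp h1 h2).of_eq fun τ => ?_
    rw [Bool.eq_iff_iff]
    simp
  · rintro τ ⟨h1, -⟩ x hx
    rw [← h1] at hx
    simp only [auxEnc, List.mem_map] at hx
    obtain ⟨b, _, rfl⟩ := hx
    cases b <;> simp
  · intro n
    obtain ⟨σ, hσ, hl⟩ := hinf (n + K n)
    refine ⟨auxEnc (σ.take n), ⟨by rw [auxDec_enc], ?_⟩, by simp [auxEnc, hl]⟩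
    rw [auxDec_enc, auxB_iff]
    refine ⟨σ.drop n, by simp [hl], ?_⟩
    rw [List.take_append_drop, hd]
    exact hσ
  · intro n F hF
    refine le_trans ?_ (hKs n)
    rw [← auxE_card]
    refine Finset.card_le_card_of_injOn auxDec ?_ ?_
    · intro τ hτ
      obtain ⟨⟨h1, h2⟩, h3⟩ := hF hτ
      have h4 : (auxDec τ).length = n := by simpa [auxDec] using h3
      rw [h4] at h2
      rw [Finset.mem_coe, List.mem_toFinset, mem_auxE]
      exact ⟨h4, h2⟩
    · intro a ha b hb hab
      rw [← (hF ha).1.1, ← (hF hb).1.1, hab]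
  · intro g hg
    have hg2 : ∀ s, g s ≠ 2 := by
      intro s hs
      have h1 := (hg (s + 1)).1
      have : (2 : ℕ) ∈ auxEnc (auxDec (List.ofFn fun i : Fin (s + 1) => g i)) := by
        rw [h1, List.mem_ofFn]
        exact ⟨Fin.last s, by simpa using hs⟩
      simp only [auxEnc, List.mem_map] at this
      obtain ⟨b, _, hb⟩ := this
      cases b <;> simp at hb
    have hset : {s : ℕ | g s ≠ 2} = Set.univ := Set.eq_univ_of_forall hg2
    refine ⟨by rw [hset]; exact Set.infinite_univ, ?_⟩
    intro n
    have hp : (fun s => g s ≠ 2) = fun _ => True := by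
      funext s; simp [hg2 s]
    have h2 := (hg n).2
    rw [auxB_iff] at h2
    obtain ⟨τ, _, h3⟩ := h2
    rw [hd] at h3
    have h4 := hT _ _ (List.prefix_append _ _) h3
    simp only [auxDec, List.map_ofFn] at h4
    convert h4 using 3
    simp [hp, Nat.nth_true]
end

section
/- Let T be a computable infinite binary tree whose set of paths is finite. Then T has a computable path. -/
/-- Initial segment. -/
def seg (f : ℕ → Bool) (n : ℕ) : List Bool := List.ofFn fun i : Fin n => f i

theorem seg_length (f : ℕ → Bool) (n : ℕ) : (seg f n).length = n := by simp [seg]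

theorem seg_get (f : ℕ → Bool) (n i : ℕ) (h : i < n) : (seg f n)[i]? = some (f i) := by
  simp [seg, List.getElem?_ofFn, h]

theorem seg_prefix (f : ℕ → Bool) {m n : ℕ} (h : m ≤ n) : seg f m <+: seg f n := by
  rw [List.prefix_iff_eq_take]
  apply List.ext_getElem?
  intro i
  rw [List.getElem?_take, seg_length]
  split_ifs with hi
  · rw [seg_get _ _ _ hi, seg_get _ _ _ (hi.trans_le h)]
  · rw [List.getElem?_eq_none]; rw [seg_length]; omega

theorem seg_of_list (τ : List Bool) : seg (fun i => (τ[i]?).getD false) τ.length = τ := by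
  apply List.ext_getElem?
  intro i
  by_cases h : i < τ.length
  · rw [seg_get _ _ _ h, List.getElem?_eq_getElem h]; simp
  · rw [List.getElem?_eq_none, List.getElem?_eq_none]
    · omega
    · rw [seg_length]; omega

theorem konig (T : Set (List Bool)) (hT : IsBinTree T) (K : Set (ℕ → Bool)) (hK : IsClosed K)
    (h : ∀ m, ∃ g ∈ K, ∃ k, m ≤ k ∧ seg g k ∈ T) : ∃ g ∈ K, IsPath T g := by
  have := IsCompact.nonempty_iInter_of_sequence_nonempty_isCompact_isClosed
    (fun m => K ∩ {g | seg g m ∈ T}) ?_ ?_ ?_ ?_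
  · obtain ⟨g, hg⟩ := this
    rw [Set.mem_iInter] at hg
    exact ⟨g, (hg 0).1, fun n => (hg n).2⟩
  · rintro i g ⟨h1, h2⟩
    exact ⟨h1, hT _ _ (seg_prefix g (Nat.le_succ i)) h2⟩
  · intro i
    obtain ⟨g, hg, k, hk, h2⟩ := h i
    exact ⟨g, hg, hT _ _ (seg_prefix g hk) h2⟩
  · apply IsClosed.isCompact
    refine hK.inter ?_
    have : Continuous (fun (g : ℕ → Bool) (i : Fin 0) => g i) := by fun_prop
    exact (isClosed_discrete {v : Fin 0 → Bool | List.ofFn v ∈ T}).preimage this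
  · intro m
    refine hK.inter ?_
    have : Continuous (fun (g : ℕ → Bool) (i : Fin m) => g i) := by fun_prop
    exact (isClosed_discrete {v : Fin m → Bool | List.ofFn v ∈ T}).preimage this

/-- All strings of a given length. -/
def strs (n : ℕ) : List (List Bool) :=
  Nat.rec [[]] (fun _ L => L.flatMap fun τ => [true :: τ, false :: τ]) n

theorem mem_strs (n : ℕ) (τ : List Bool) : τ ∈ strs n ↔ τ.length = n := by
  induction n generalizing τ with
  | zero => simp [strs]
  | succ n ih =>
    have : strs (n+1) = (strs n).flatMap fun τ => [true :: τ, false :: τ] := rfl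
    rw [this, List.mem_flatMap]
    constructor
    · rintro ⟨a, ha, h⟩
      rw [ih] at ha
      simp at h
      rcases h with rfl | rfl <;> simp [ha]
    · intro h
      rcases τ with _ | ⟨b, τ⟩
      · simp at h
      · refine ⟨τ, (ih τ).2 (by simpa using h), ?_⟩
        cases b <;> simp

theorem primrec_strs : Primrec strs := by
  unfold strs
  refine Primrec.nat_rec₁ _ (Primrec.list_flatMap Primrec.snd ?_)
  refine Primrec.list_cons.comp (Primrec.list_cons.comp (Primrec.const true) Primrec.snd)
    (Primrec.list_cons.comp (Primrec.list_cons.comp (Primrec.const false) Primrec.snd)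
      (Primrec.const []))

theorem computable_all {α β : Type} [Primcodable α] [Primcodable β] {L : α → List β}
    {p : α → β → Bool} (hL : Computable L) (hp : Computable₂ p) :
    Computable fun a => (L a).all (p a) := by
  have h1 : Computable fun a => Nat.rec (motive := fun _ => Bool) true
      (fun y IH => IH && (((L a)[y]?).map (p a)).getD true) (L a).length := by
    refine Computable.nat_rec (h := fun a q => q.2 && (((L a)[q.1]?).map (p a)).getD true)
      (Computable.list_length.comp hL) (Computable.const true) ?_
    refine (Primrec.and.to_comp).comp (Computable.snd.comp Computable.snd) ?_
    refine Computable.option_getD ?_ (Computable.const true)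
    refine Computable.option_map ?_ ?_
    · exact Computable.list_getElem?.comp (hL.comp Computable.fst)
        (Computable.fst.comp Computable.snd)
    · exact hp.comp (Computable.fst.comp Computable.fst) Computable.snd
  refine h1.of_eq fun a => ?_
  have key : ∀ n, (Nat.rec (motive := fun _ => Bool) true
      (fun y IH => IH && (((L a)[y]?).map (p a)).getD true) n) = ((L a).take n).all (p a) := by
    intro n
    induction n with
    | zero => simp
    | succ n ih =>
      simp only [ih, List.take_add_one, List.all_append]
      cases (L a)[n]? <;> simp
  rw [key, List.take_length]

/-- A computable infinite binary tree with only finitely many paths has a computable path. -/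
theorem stmt12 (T : Set (List Bool)) (hT : IsBinTree T) (hcomp : ComputablePred (· ∈ T))
    (hinf : ∀ n : ℕ, ∃ σ ∈ T, σ.length = n)
    (hfin : {f : ℕ → Bool | IsPath T f}.Finite) :
    ∃ f : ℕ → Bool, Computable f ∧ IsPath T f := by
  obtain ⟨c, hc, hcT⟩ := ComputablePred.computable_iff.1 hcomp
  have hmem : ∀ τ, τ ∈ T ↔ c τ = true := fun τ => by
    have := congrFun hcT τ
    simpa using this
  -- a path
  obtain ⟨f, -, hf⟩ := konig T hT Set.univ isClosed_univ (fun m => by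
    obtain ⟨σ, hσ, hl⟩ := hinf m
    exact ⟨_, trivial, σ.length, hl.ge, by rw [seg_of_list]; exact hσ⟩)
  -- it is isolated
  obtain ⟨N, hN⟩ : ∃ N, ∀ g, IsPath T g → (∀ i < N, g i = f i) → g = f := by
    have : ∀ g : ℕ → Bool, ∃ n, g ≠ f → g n ≠ f n := fun g => by
      by_cases h : g = f
      · exact ⟨0, fun h' => absurd h h'⟩
      · obtain ⟨n, hn⟩ := Function.ne_iff.1 h
        exact ⟨n, fun _ => hn⟩
    choose d hd using this
    refine ⟨hfin.toFinset.sup d + 1, fun g hg h => ?_⟩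
    by_contra hne
    refine hd g hne (h _ (Nat.lt_succ_of_le (Finset.le_sup (f := d) ?_)))
    simpa using hg
  set σ := seg f N with hσ
  let ok : Bool → ℕ → ℕ → Bool := fun b n m =>
    (strs (n + 1 + m)).all fun ρ => !(c (σ ++ ρ)) || decide ((σ ++ ρ)[n]? = some b)
  have hok : ∀ b, Computable₂ (ok b) := fun b => by
    refine computable_all (α := ℕ × ℕ) (L := fun q => strs (q.1 + 1 + q.2))
      (p := fun q ρ => !(c (σ ++ ρ)) || decide ((σ ++ ρ)[q.1]? = some b)) ?_ ?_
    · exact (primrec_strs.comp (Primrec.nat_add.comp (Primrec.succ.comp Primrec.fst)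
        Primrec.snd)).to_comp
    · have h1 : Computable fun x : (ℕ × ℕ) × List Bool => σ ++ x.2 :=
        Computable.list_append.comp (Computable.const σ) Computable.snd
      refine Primrec.or.to_comp.comp (Primrec.not.to_comp.comp (hc.comp h1)) ?_
      have h2 : Computable fun x : (ℕ × ℕ) × List Bool => (σ ++ x.2)[x.1.1]? :=
        Computable.list_getElem?.comp h1 (Computable.fst.comp Computable.fst)
      have h3 : Computable fun o : Option Bool => decide (o = some b) :=
        (Primrec.dom_finite _).to_comp
      exact h3.comp h2
  let Q : ℕ → ℕ → Option Bool := fun n m =>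
    bif ok true n m then some true else bif ok false n m then some false else none
  have hQ : Computable₂ Q :=
    Computable.cond (hok true) (Computable.const _)
      (Computable.cond (hok false) (Computable.const _) (Computable.const _))
  -- soundness
  have sound : ∀ b n m, ok b n m = true → b = f n := by
    intro b n m h
    obtain ⟨ρ, hρ⟩ := seg_prefix f (show N ≤ N + (n + 1 + m) by omega)
    have hl : ρ.length = n + 1 + m := by
      have := congrArg List.length hρ
      simp only [List.length_append, seg_length] at this
      omega
    have := List.all_eq_true.1 h ρ ((mem_strs _ _).2 hl)
    rw [hσ, hρ, seg_get _ _ _ (by omega), show c (seg f (N + (n + 1 + m))) = true from (hmem _).1 (hf _)] at this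
    simpa [eq_comm] using this
  -- completeness
  have complete : ∀ n, ∃ m, ok (f n) n m = true := by
    intro n
    by_contra hcon
    push Not at hcon
    obtain ⟨g, ⟨hg1, hg2⟩, hg⟩ := konig T hT ({g | ∀ i < N, g i = f i} ∩ {g | g n ≠ f n}) (by
      refine IsClosed.inter ?_ ?_
      · simp only [Set.ofPred_forall]
        exact isClosed_iInter fun i => isClosed_iInter fun _ =>
          isClosed_eq (continuous_apply i) continuous_const
      · exact (isClosed_discrete {b : Bool | b ≠ f n}).preimage
          (show Continuous fun g : ℕ → Bool => g n from continuous_apply n)) (by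
      intro m
      have h := hcon m
      simp only [ok, ne_eq, List.all_eq_true, not_forall] at h
      obtain ⟨ρ, hρ, h⟩ := h
      rw [mem_strs] at hρ
      simp only [Bool.or_eq_true, not_or, Bool.not_eq_true', decide_eq_true_eq,
        Bool.not_eq_false] at h
      refine ⟨fun i => ((σ ++ ρ)[i]?).getD false, ⟨fun i hi => ?_, fun h' => h.2 ?_⟩,
        (σ ++ ρ).length, ?_, ?_⟩
      · have : i < σ.length := by rw [hσ, seg_length]; exact hi
        simp only
        rw [List.getElem?_append_left this, hσ, seg_get _ _ _ hi]; rfl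
      · have hlt : n < (σ ++ ρ).length := by simp only [List.length_append]; omega
        rw [← h']
        simp only
        rw [List.getElem?_eq_getElem hlt]; rfl
      · simp only [List.length_append]; omega
      · rw [seg_of_list, hmem]; exact h.1)
    exact hg2 (by rw [hN g hg hg1])
  have Qs : ∀ n m b, b ∈ Q n m → b = f n := by
    intro n m b h
    simp only [Q] at h
    cases h1 : ok true n m
    · cases h2 : ok false n m
      · simp [h1, h2] at h
      · simp [h1, h2] at h
        rw [h]; exact sound _ _ _ h2
    · simp [h1] at h
      rw [h]; exact sound _ _ _ h1
  have hpart : Computable f := by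
    refine (Partrec.rfindOpt hQ).of_eq fun n => ?_
    have hdom : (Nat.rfindOpt (Q n)).Dom := by
      rw [Nat.rfindOpt_dom]
      obtain ⟨m, hm⟩ := complete n
      refine ⟨m, ?_⟩
      simp only [Q]
      cases h1 : ok true n m
      · cases h2 : ok false n m
        · cases hfn : f n <;> simp [hfn, h1, h2] at hm
        · exact ⟨false, by simp⟩
      · exact ⟨true, by simp⟩
    have hget := Part.get_mem hdom
    obtain ⟨m, hm⟩ := Nat.rfindOpt_spec hget
    rw [Qs _ _ _ hm] at hget
    exact Part.eq_some_iff.2 hget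
  exact ⟨f, hpart, hf⟩
end
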